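/- Let Q be a commutative Moufang loop and let α : Q → Q be any map. Then α is a J-central orthoautomorphism of Q if and only if the map id-α : x ↦ x-α(x) is a J-central orthoautomorphism of Q. -/

import Mathlib

/-- A loop: a quasigroup with a two-sided neutral element. -/
structure Loop (Q : Type) where
  add : Q → Q → Q
  zero : Q
  addLeftBij : ∀ x, Function.Bijective fun y => add x y
  addRightBij : ∀ x, Function.Bijective fun y => add y x
  zero_add : ∀ x, add zero x = x
  add_zero : ∀ x, add x zero = x

namespace Loop

/-- The center of a loop: elements commuting and associating with everything. -/
def center {Q : Type} (L : Loop Q) : Set Q :=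
  {z | (∀ x, L.add z x = L.add x z) ∧
       (∀ x y, L.add z (L.add x y) = L.add (L.add z x) y) ∧
       (∀ x y, L.add x (L.add z y) = L.add (L.add x z) y) ∧
       (∀ x y, L.add x (L.add y z) = L.add (L.add x y) z)}

/-- A map `α` is central if `Z(Q) + α(x) = Z(Q) + x` for every `x`. -/
def IsCentral {Q : Type} (L : Loop Q) (α : Q → Q) : Prop :=
  ∀ x, (fun z => L.add z (α x)) '' L.center = (fun z => L.add z x) '' L.center

/-- Automorphism of a loop: a bijective map respecting the operation. -/
def IsAut {Q : Type} (L : Loop Q) (f : Q → Q) : Prop :=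
  Function.Bijective f ∧ ∀ x y, f (L.add x y) = L.add (f x) (f y)

/-- `neg` provides two-sided inverses for the loop. -/
def IsTwoSidedInv {Q : Type} (L : Loop Q) (neg : Q → Q) : Prop :=
  ∀ x, L.add x (neg x) = L.zero ∧ L.add (neg x) x = L.zero

/-- Commutative Moufang loop: commutative and satisfying the Moufang identity. -/
def IsCommMoufang {Q : Type} (L : Loop Q) : Prop :=
  (∀ x y, L.add x y = L.add y x) ∧
  (∀ x y z, L.add x (L.add y (L.add x z)) = L.add (L.add (L.add x y) x) z)

end Loop

open Loop in
/-- `α` is a J-central orthoautomorphism: a bijective endomorphism with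
`x + α(x)` central and `id - α` bijective. -/
def IsJCentralOrthoAut {Q : Type} (L : Loop Q) (neg : Q → Q) (α : Q → Q) : Prop :=
  Function.Bijective α ∧ (∀ x y, α (L.add x y) = L.add (α x) (α y)) ∧
  (∀ x, L.add x (α x) ∈ L.center) ∧
  Function.Bijective (fun x => L.add x (neg (α x)))

section Aux

variable {Q : Type} [Add Q] [Neg Q] [Zero Q]

/-- Commutative Moufang loop facts in additive notation. -/
structure AuxCML (Q : Type) [Add Q] [Neg Q] [Zero Q] : Prop where
  comm : ∀ x y : Q, x + y = y + x
  mouf : ∀ x y z : Q, x + (y + (x + z)) = ((x + y) + x) + z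
  zadd : ∀ x : Q, 0 + x = x
  ninv : ∀ x : Q, x + -x = 0
  canc : ∀ x y z : Q, x + y = x + z → y = z

/-- Left nucleus. -/
def AuxNuc (z : Q) : Prop := ∀ x y : Q, z + (x + y) = (z + x) + y

namespace AuxCML

theorem addz (H : AuxCML Q) (x : Q) : x + 0 = x := by rw [H.comm, H.zadd]

theorem lip (H : AuxCML Q) (x z : Q) : -x + (x + z) = z := by
  apply H.canc x
  rw [H.mouf, H.ninv, H.zadd]

theorem nn (H : AuxCML Q) (x : Q) : - -x = x := by
  apply H.canc (-x)
  rw [H.ninv, H.comm, H.ninv]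

theorem lip' (H : AuxCML Q) (x z : Q) : x + (-x + z) = z := by
  have := H.lip (-x) z
  rwa [H.nn] at this

theorem alt (H : AuxCML Q) (x z : Q) : x + (x + z) = (x + x) + z := by
  have := H.mouf x 0 z
  rwa [H.zadd, H.addz] at this

theorem negadd (H : AuxCML Q) (x y : Q) : -(x + y) = -x + -y := by
  have h1 : -(x + y) + y = -x := by
    have := H.lip (x + y) (-x)
    rwa [H.comm (x + y) (-x), H.lip] at this
  have h2 := H.lip y (-(x + y))
  rw [H.comm y, h1] at h2
  rw [← h2, H.comm]

theorem aut (H : AuxCML Q) (x y w : Q) :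
    x + (y + w) = (x + (x + y)) + (-x + w) := by
  have := H.mouf x y (-x + w)
  rwa [H.lip', H.comm (x + y) x] at this

theorem dist (H : AuxCML Q) (x y z : Q) :
    (x + y) + (x + z) = (x + x) + (y + z) := by
  rw [← H.alt, H.comm y z, H.aut x z y, H.comm (x + (x + z)), H.aut x (-x + y), H.lip', H.lip]

theorem sq (H : AuxCML Q) (x y : Q) :
    (x + y) + (x + y) = (x + x) + (y + y) := H.dist x y y

theorem cube (H : AuxCML Q) (x : Q) : AuxNuc (x + (x + x)) := by
  have e : ∀ y : Q, (x + (x + x)) + y = x + (x + (x + y)) := by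
    intro y
    rw [H.mouf x x y, H.comm x (x + x)]
  intro y w
  rw [e, e, H.alt x (y + w), ← H.dist, H.aut x (x + y), H.lip]

theorem nuc_neg (H : AuxCML Q) {z : Q} (hz : AuxNuc z) : AuxNuc (-z) := by
  intro x y
  apply H.canc z
  rw [H.lip', hz, H.lip']

theorem nuc_add {z w : Q} (hz : AuxNuc z) (hw : AuxNuc w) : AuxNuc (z + w) := by
  intro x y
  rw [← hz, hw, hz, hz]

/-- The key direction. -/
theorem key (H : AuxCML Q) (α : Q → Q) (hom : ∀ x y, α (x + y) = α x + α y)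
    (hJ : ∀ x, AuxNuc (x + α x)) :
    (∀ x y : Q, (x + y) + -(α (x + y)) = (x + -(α x)) + (y + -(α y))) ∧
    (∀ x : Q, AuxNuc (x + (x + -(α x)))) := by
  have hc : ∀ x, ∃ c, AuxNuc c ∧ -(α x) = c + x := by
    intro x
    refine ⟨-(x + α x), H.nuc_neg (hJ x), ?_⟩
    rw [H.negadd, H.comm (-x), H.comm _ x]
    have := H.lip' x (-(α x))
    rw [H.comm (-x)] at this
    exact this.symm
  have pull : ∀ c x y : Q, AuxNuc c → x + (c + y) = c + (x + y) := by
    intro c x y h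
    rw [H.comm, ← h, H.comm y]
  constructor
  · intro x y
    obtain ⟨c, hc1, hc2⟩ := hc x
    obtain ⟨d, hd1, hd2⟩ := hc y
    rw [hom, H.negadd, hc2, hd2, pull c x x hc1, pull d y y hd1, ← hc1, ← hc1,
      pull d x y hd1, pull d _ (y + y) hd1, pull c _ _ hc1, pull d _ _ hd1]
    congr 2
    exact H.sq x y
  · intro x
    obtain ⟨c, hc1, hc2⟩ := hc x
    rw [hc2, pull c x x hc1, pull c _ _ hc1]
    exact nuc_add hc1 (H.cube x)

end AuxCML

end Aux

theorem aux_nuc_center {Q : Type} (L : Loop Q) (comm : ∀ x y, L.add x y = L.add y x) (z : Q) :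
    z ∈ L.center ↔ ∀ x y, L.add z (L.add x y) = L.add (L.add z x) y := by
  constructor
  · intro h
    exact h.2.1
  · intro h
    refine ⟨fun x => comm _ _, h, fun x y => ?_, fun x y => ?_⟩
    · rw [comm x, ← h, comm y x, h, comm z x]
    · rw [comm y z, comm x, ← h, comm y x, comm z]

theorem aux_invol {Q : Type} (L : Loop Q) (h : L.IsCommMoufang)
    (neg : Q → Q) (hneg : L.IsTwoSidedInv neg) (α : Q → Q) :
    (fun x => L.add x (neg (L.add x (neg (α x))))) = α := by
  letI : Add Q := ⟨L.add⟩
  letI : Neg Q := ⟨neg⟩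
  letI : Zero Q := ⟨L.zero⟩
  have H : AuxCML Q := ⟨h.1, h.2, L.zero_add, fun x => (hneg x).1,
    fun x y z e => (L.addLeftBij x).1 e⟩
  funext x
  change x + -(x + -(α x)) = α x
  rw [H.negadd, H.nn, H.lip']

theorem aux_dir {Q : Type} (L : Loop Q) (h : L.IsCommMoufang)
    (neg : Q → Q) (hneg : L.IsTwoSidedInv neg) (α : Q → Q)
    (hα : IsJCentralOrthoAut L neg α) :
    IsJCentralOrthoAut L neg (fun x => L.add x (neg (α x))) := by
  letI : Add Q := ⟨L.add⟩
  letI : Neg Q := ⟨neg⟩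
  letI : Zero Q := ⟨L.zero⟩
  have H : AuxCML Q := ⟨h.1, h.2, L.zero_add, fun x => (hneg x).1,
    fun x y z e => (L.addLeftBij x).1 e⟩
  obtain ⟨h1, h2, h3, h4⟩ := hα
  have k := H.key α h2 (fun x => (aux_nuc_center L h.1 _).1 (h3 x))
  refine ⟨h4, k.1, fun x => (aux_nuc_center L h.1 _).2 (k.2 x), ?_⟩
  rw [aux_invol L h neg hneg α]
  exact h1

open Loop in
/-- In a commutative Moufang loop, `α` is a J-central orthoautomorphism iff
`id - α` is. -/
theorem stmt {Q : Type} (L : Loop Q) (h : L.IsCommMoufang)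
    (neg : Q → Q) (hneg : L.IsTwoSidedInv neg) (α : Q → Q) :
    IsJCentralOrthoAut L neg α ↔
      IsJCentralOrthoAut L neg (fun x => L.add x (neg (α x))) := by
  refine ⟨aux_dir L h neg hneg α, fun hb => ?_⟩
  have := aux_dir L h neg hneg _ hb
  rwa [aux_invol L h neg hneg α] at this
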